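/- Let n₀,n₁,n₂,n₃ ∈ ℂ and let (p(τ), A(τ)) be a holomorphic solution of the Hamiltonian system on an open subset V ⊆ ℍ such that for every τ ∈ V, p(τ) ∉ Λ_τ, 2p(τ) ∉ Λ_τ and p(τ) + ω_k/2 ∉ Λ_τ for k = 0,1,2,3. Define F(τ) = A(τ) + (1/2)(ζ(2p(τ)|τ) − 2ζ(p(τ)|τ)). Then F satisfies the linear first-order ODE dF/dτ = (i/(2π))(2℘(2p(τ)|τ) − ℘(p(τ)|τ) + η₁(τ))F(τ) − (i/(4π)) Σ_{k=0}^{3} n_k(n_k+1)℘′(p(τ) + ω_k/2|τ). In particular, if n_k = 0 for all k, then dF/dτ = (i/(2π))(2℘(2p(τ)|τ) − ℘(p(τ)|τ) + η₁(τ))F(τ). -/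

import Mathlib

open Complex Filter Topology Asymptotics

noncomputable section

/-- membership in the lattice `Λ_τ = ℤ + τℤ`. -/
def InLattice (τ z : ℂ) : Prop := ∃ m n : ℤ, z = (m : ℂ) + (n : ℂ) * τ

/-- the half-period generators `ω₀ = 0, ω₁ = 1, ω₂ = τ, ω₃ = 1 + τ`. -/
def halfp (τ : ℂ) : Fin 4 → ℂ := ![0, 1, τ, 1 + τ]

/-- the Weierstrass elliptic function `℘(z|τ)`. -/
def wp (τ z : ℂ) : ℂ :=
  z⁻¹ ^ 2 + ∑' w : {w : ℤ × ℤ // w ≠ 0},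
    ((z - ((w.1.1 : ℂ) + (w.1.2 : ℂ) * τ))⁻¹ ^ 2 - ((w.1.1 : ℂ) + (w.1.2 : ℂ) * τ)⁻¹ ^ 2)

/-- `℘′(z|τ)`, the `z`-derivative of `℘`. -/
def wpd (τ z : ℂ) : ℂ := deriv (wp τ) z

/-- `℘″(z|τ)`. -/
def wpdd (τ z : ℂ) : ℂ := deriv (wpd τ) z

def e1 (τ : ℂ) : ℂ := wp τ (1 / 2)
def e2 (τ : ℂ) : ℂ := wp τ (τ / 2)
def e3 (τ : ℂ) : ℂ := wp τ ((1 + τ) / 2)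

def g2 (τ : ℂ) : ℂ := -4 * (e1 τ * e2 τ + e1 τ * e3 τ + e2 τ * e3 τ)

/-- `zeta` is the Weierstrass zeta function: for each `τ ∈ ℍ`, `zeta τ` is odd, satisfies
`∂ζ/∂z = -℘` off the lattice, and `ζ(z|τ) - 1/z → 0` as `z → 0`. -/
def IsWeierstrassZeta (zeta : ℂ → ℂ → ℂ) : Prop :=
  ∀ τ : ℂ, 0 < τ.im →
    (∀ z : ℂ, zeta τ (-z) = - zeta τ z) ∧
    (∀ z : ℂ, ¬ InLattice τ z → HasDerivAt (zeta τ) (- wp τ z) z) ∧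
    Tendsto (fun z => zeta τ z - z⁻¹) (𝓝[≠] (0 : ℂ)) (𝓝 0)

/-- `eta1 τ = ζ(z+1|τ) - ζ(z|τ)` is the first quasi-period. -/
def IsEta1 (zeta : ℂ → ℂ → ℂ) (eta1 : ℂ → ℂ) : Prop :=
  ∀ τ : ℂ, 0 < τ.im → ∀ z : ℂ, ¬ InLattice τ z →
    eta1 τ = zeta τ (z + 1) - zeta τ z

/-- `eta2 τ = ζ(z+τ|τ) - ζ(z|τ)` is the second quasi-period. -/
def IsEta2 (zeta : ℂ → ℂ → ℂ) (eta2 : ℂ → ℂ) : Prop :=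
  ∀ τ : ℂ, 0 < τ.im → ∀ z : ℂ, ¬ InLattice τ z →
    eta2 τ = zeta τ (z + τ) - zeta τ z

/-- `sigma` is the Weierstrass sigma function: entire, odd, with
`∂/∂z log σ = ζ` off the lattice and `σ(z|τ)/z → 1` as `z → 0`. -/
def IsWeierstrassSigma (zeta sigma : ℂ → ℂ → ℂ) : Prop :=
  ∀ τ : ℂ, 0 < τ.im →
    (∀ z : ℂ, sigma τ (-z) = - sigma τ z) ∧
    Differentiable ℂ (sigma τ) ∧
    (∀ z : ℂ, ¬ InLattice τ z → HasDerivAt (sigma τ) (zeta τ z * sigma τ z) z) ∧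
    Tendsto (fun z => sigma τ z / z) (𝓝[≠] (0 : ℂ)) (𝓝 1)

/-- the Hamiltonian system (142) for `(p(τ), A(τ))` on `V`. -/
def HamSystem (n : Fin 4 → ℂ) (zeta : ℂ → ℂ → ℂ) (eta1 : ℂ → ℂ)
    (V : Set ℂ) (p A : ℂ → ℂ) : Prop :=
  ∀ τ ∈ V,
    HasDerivAt p ((-Complex.I / (4 * (Real.pi : ℂ))) *
      (2 * A τ - zeta τ (2 * p τ) + 2 * p τ * eta1 τ)) τ ∧
    HasDerivAt A ((Complex.I / (4 * (Real.pi : ℂ))) *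
      ((2 * wp τ (2 * p τ) + 2 * eta1 τ) * A τ - (3 / 2) * wpd τ (2 * p τ)
        - ∑ k : Fin 4, n k * (n k + 1) * wpd τ (p τ + halfp τ k / 2))) τ

/-- the generalized Lamé potential `I(z;τ)`. -/
def Ipot (n : Fin 4 → ℂ) (zeta : ℂ → ℂ → ℂ) (A B p τ z : ℂ) : ℂ :=
  (∑ k : Fin 4, n k * (n k + 1) * wp τ (z + halfp τ k / 2))
    + (3 / 4) * (wp τ (z + p) + wp τ (z - p))
    + A * (zeta τ (z + p) - zeta τ (z - p)) + B

/-!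
Put `φ(z|τ) = ζ(z|τ) - η₁(τ)z`, so that `ζ(2p) - 2ζ(p) = φ(2p) - 2φ(p)`. The Hamiltonian system and
the chain rule express `dF/dτ` through `∂φ/∂z = -℘ - η₁` and `∂φ/∂τ`.

Up to the constant `πi`, `φ` is the logarithmic derivative of a translate `ϑ` of the Jacobi theta
function. Indeed, when `L = φ(z + τ) - φ(z)`, the function `φϑ + (L/2πi)ϑ'` has the quasi-periods of
`ϑ` and no poles, and by Fourier expansion such a function is a multiple of `ϑ`; as `ϑ` has a simple
zero at `0`, this forces `L = -2πi`. The heat equation `4πi ∂ϑ/∂τ = ∂²ϑ/∂z²` then gives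
`4πi ∂φ/∂τ = -℘' - 2φ(℘ + η₁)`.

What remains is the duplication formula `2(ζ(2p) - 2ζ(p))(℘(p) - ℘(2p)) = ℘'(p) + ℘'(2p)`, the
`u`-derivative at `u = v = p` of the addition theorem
`(ζ(u + v) - ζ(u) - ζ(v))² = ℘(u) + ℘(v) + ℘(u + v)`, which follows from Liouville's theorem.
-/

open scoped Real

/-- The pair of periods `(1, τ)`, through which the theory of `PeriodPair.weierstrassP` applies to
`wp τ`. -/
def upperPair (τ : ℂ) (hτ : 0 < τ.im) : PeriodPair where
  ω₁ := 1
  ω₂ := τ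
  indep := by
    rw [LinearIndependent.pair_iff]
    intro s t h
    obtain ⟨hre, him⟩ : s + t * τ.re = 0 ∧ (t = 0 ∨ τ.im = 0) := by
      simpa [Complex.ext_iff] using h
    obtain rfl := him.resolve_right hτ.ne'
    simpa using hre

section Lattice

variable {τ : ℂ}

lemma mem_lattice_upperPair (hτ : 0 < τ.im) {z : ℂ} :
    z ∈ (upperPair τ hτ).lattice ↔ InLattice τ z := by
  simp only [PeriodPair.mem_lattice, upperPair, InLattice, mul_one, eq_comm]

namespace InLattice

lemma zero (τ : ℂ) : InLattice τ 0 := ⟨0, 0, by simp⟩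

lemma one (τ : ℂ) : InLattice τ 1 := ⟨1, 0, by simp⟩

lemma self (τ : ℂ) : InLattice τ τ := ⟨0, 1, by simp⟩

lemma add {z w : ℂ} (hz : InLattice τ z) (hw : InLattice τ w) : InLattice τ (z + w) := by
  obtain ⟨a, b, rfl⟩ := hz
  obtain ⟨c, d, rfl⟩ := hw
  exact ⟨a + c, b + d, by push_cast; ring⟩

lemma two_mul {z : ℂ} (hz : InLattice τ z) : InLattice τ (2 * z) :=
  _root_.two_mul z ▸ hz.add hz

lemma neg {z : ℂ} (hz : InLattice τ z) : InLattice τ (-z) := by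
  obtain ⟨a, b, rfl⟩ := hz
  exact ⟨-a, -b, by push_cast; ring⟩

lemma add_iff {z w : ℂ} (hw : InLattice τ w) : InLattice τ (z + w) ↔ InLattice τ z :=
  ⟨fun h => by simpa using h.add hw.neg, fun h => h.add hw⟩

lemma neg_iff {z : ℂ} : InLattice τ (-z) ↔ InLattice τ z :=
  ⟨fun h => by simpa using h.neg, neg⟩

lemma apply_add {α : Type*} {f : ℂ → α} {l : ℂ} (hl : InLattice τ l) (h1 : f.Periodic 1)
    (h2 : f.Periodic τ) (z : ℂ) : f (z + l) = f z := by
  obtain ⟨m, n, rfl⟩ := hl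
  simpa only [mul_one] using (h1.int_mul m).add_period (h2.int_mul n) z

end InLattice

lemma isOpen_setOf_not_inLattice (hτ : 0 < τ.im) : IsOpen {z | ¬ InLattice τ z} := by
  simp only [← mem_lattice_upperPair hτ]
  exact (upperPair τ hτ).isClosed_lattice.isOpen_compl

lemma eventually_not_inLattice (hτ : 0 < τ.im) {z : ℂ} (hz : ¬ InLattice τ z) :
    ∀ᶠ w in 𝓝 z, ¬ InLattice τ w :=
  (isOpen_setOf_not_inLattice hτ).mem_nhds hz

lemma eventually_not_inLattice_nhdsNE (hτ : 0 < τ.im) (z : ℂ) :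
    ∀ᶠ w in 𝓝[≠] z, ¬ InLattice τ w := by
  have h := (upperPair τ hτ).compl_lattice_sdiff_singleton_mem_nhds z
  filter_upwards [nhdsWithin_le_nhds h, self_mem_nhdsWithin] with w hw hwz hin
  exact hw ⟨(mem_lattice_upperPair hτ).mpr hin, hwz⟩

lemma isPreconnected_setOf_not_inLattice (τ : ℂ) : IsPreconnected {z | ¬ InLattice τ z} := by
  have hrange : {z | InLattice τ z} = Set.range fun x : ℤ × ℤ => (x.1 : ℂ) + x.2 * τ := by
    ext z
    simp [InLattice, eq_comm]
  have hcount : {z | InLattice τ z}.Countable := hrange ▸ Set.countable_range _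
  exact (hcount.isConnected_compl_of_one_lt_rank (by simp)).isPreconnected

end Lattice

section RemovableSingularities

lemma tendsto_sub_self_nhdsNE (z : ℂ) : Tendsto (fun w => w - z) (𝓝[≠] z) (𝓝[≠] 0) := by
  rw [← sub_self z]
  exact map_subRight_nhdsNE.le

lemma analyticAt_update_of_tendsto {f : ℂ → ℂ} {z c : ℂ}
    (hd : ∀ᶠ w in 𝓝[≠] z, DifferentiableAt ℂ f w) (hf : Tendsto f (𝓝[≠] z) (𝓝 c)) :
    AnalyticAt ℂ (Function.update f z c) z := by
  refine analyticAt_of_differentiable_on_punctured_nhds_of_continuousAt ?_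
    (continuousAt_update_same.2 hf)
  filter_upwards [hd, eventually_nhdsNE_eventually_nhds_iff.2
    (Function.update_eventuallyEq_nhdsNE f z z c)] with w hw heq
  exact hw.congr_of_eventuallyEq heq

lemma exists_differentiable_extension {f : ℂ → ℂ}
    (hd : ∀ z, ∀ᶠ w in 𝓝[≠] z, DifferentiableAt ℂ f w)
    (hlim : ∀ z, ∃ c, Tendsto f (𝓝[≠] z) (𝓝 c)) :
    ∃ F : ℂ → ℂ, Differentiable ℂ F ∧ ∀ z, Tendsto f (𝓝[≠] z) (𝓝 (F z)) := by
  choose F hF using hlim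
  refine ⟨F, fun z => ?_, hF⟩
  refine (analyticAt_update_of_tendsto (hd z) (hF z)).differentiableAt.congr_of_eventuallyEq ?_
  refine eventuallyEq_nhds_of_eventuallyEq_nhdsNE ?_ (Function.update_self z (F z) f).symm
  filter_upwards [hd z, self_mem_nhdsWithin] with w hw hwz
  rw [Function.update_of_ne hwz]
  exact tendsto_nhds_unique (hF w) hw.continuousAt.continuousWithinAt

lemma apply_add_eq_of_tendsto {f F m : ℂ → ℂ} {a : ℂ} (hF : ∀ z, Tendsto f (𝓝[≠] z) (𝓝 (F z)))
    (hm : Continuous m) (hf : ∀ z, ∀ᶠ w in 𝓝[≠] z, f (w + a) = m w * f w) (z : ℂ) :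
    F (z + a) = m z * F z := by
  have hmz : Tendsto m (𝓝[≠] z) (𝓝 (m z)) := hm.continuousWithinAt
  exact tendsto_nhds_unique (((hF (z + a)).comp map_add_right_nhdsNE.le).congr' (hf z))
    (hmz.mul (hF z))

lemma exists_tendsto_div_sub_sq {f : ℂ → ℂ} (hf : Differentiable ℂ f) {l : ℂ} (h0 : f l = 0)
    (h1 : deriv f l = 0) : ∃ c, Tendsto (fun z => f z / (z - l) ^ 2) (𝓝[≠] l) (𝓝 c) := by
  have hd : DifferentiableAt ℂ (dslope f l) l :=
    ((Complex.differentiableOn_dslope univ_mem).2 hf.differentiableOn).differentiableAt univ_mem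
  refine ⟨_, hd.hasDerivAt.tendsto_slope.congr' ?_⟩
  filter_upwards [self_mem_nhdsWithin] with z hz
  rw [slope_def_field, dslope_same, h1, sub_zero, dslope_of_ne f hz, slope_def_field, h0, sub_zero,
    div_div, sq]

end RemovableSingularities

section WeierstrassP

variable {τ : ℂ}

lemma wp_eq_weierstrassP (hτ : 0 < τ.im) : wp τ = (upperPair τ hτ).weierstrassP := by
  ext z
  set L := upperPair τ hτ
  set t : ℤ × ℤ → ℂ := fun x => (z - (x.1 + x.2 * τ))⁻¹ ^ 2 - (x.1 + x.2 * τ : ℂ)⁻¹ ^ 2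
  have hsum : HasSum t (L.weierstrassP z) := by
    convert L.latticeEquivProd.symm.toEquiv.hasSum_iff.mpr (L.hasSum_weierstrassP z) using 1
    ext x
    have hx := L.latticeEquiv_symm_apply x
    simp only [Function.comp_apply, LinearEquiv.coe_toEquiv, hx]
    simp [t, L, upperPair]
  have hsplit := hsum.summable.tsum_eq_add_tsum_ite (0 : ℤ × ℤ)
  rw [hsum.tsum_eq] at hsplit
  rw [hsplit, wp]
  congr 1
  · simp [t]
  · refine (tsum_subtype {w : ℤ × ℤ | w ≠ 0} t).trans (tsum_congr fun x => ?_)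
    by_cases hx : x = 0 <;> simp [hx]

lemma wp_add_of_inLattice (hτ : 0 < τ.im) {l : ℂ} (hl : InLattice τ l) (z : ℂ) :
    wp τ (z + l) = wp τ z := by
  rw [wp_eq_weierstrassP hτ]
  exact (upperPair τ hτ).weierstrassP_add_coe z ⟨l, (mem_lattice_upperPair hτ).mpr hl⟩

lemma wp_neg (hτ : 0 < τ.im) (z : ℂ) : wp τ (-z) = wp τ z := by
  rw [wp_eq_weierstrassP hτ, PeriodPair.weierstrassP_neg]

lemma hasDerivAt_wp (hτ : 0 < τ.im) {z : ℂ} (hz : ¬ InLattice τ z) :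
    HasDerivAt (wp τ) (wpd τ z) z := by
  refine DifferentiableAt.hasDerivAt ?_
  rw [wp_eq_weierstrassP hτ]
  exact ((upperPair τ hτ).analyticOnNhd_weierstrassP z
    (mt (mem_lattice_upperPair hτ).mp hz)).differentiableAt

lemma tendsto_wp_sub_inv_sq (hτ : 0 < τ.im) :
    Tendsto (fun z => wp τ z - z⁻¹ ^ 2) (𝓝[≠] 0) (𝓝 0) := by
  set L := upperPair τ hτ
  have hlim : Tendsto (L.weierstrassPExcept 0) (𝓝 0) (𝓝 0) := by
    simpa using (L.analyticAt_weierstrassPExcept 0).continuousAt.tendsto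
  refine (hlim.mono_left nhdsWithin_le_nhds).congr fun z => ?_
  rw [wp_eq_weierstrassP hτ, ← L.weierstrassPExcept_add 0 z]
  simp [L]

lemma tendsto_sub_sq_mul_wp (hτ : 0 < τ.im) {l : ℂ} (hl : InLattice τ l) :
    Tendsto (fun z => (z - l) ^ 2 * wp τ z) (𝓝[≠] l) (𝓝 1) := by
  have hzero : Tendsto (fun z => z ^ 2 * wp τ z) (𝓝[≠] 0) (𝓝 1) := by
    have hsq : Tendsto (fun z : ℂ => z ^ 2) (𝓝[≠] 0) (𝓝 (0 ^ 2)) :=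
      (continuous_pow 2).continuousWithinAt
    have hlim := (hsq.mul (tendsto_wp_sub_inv_sq hτ)).add_const 1
    rw [mul_zero, zero_add] at hlim
    refine hlim.congr' ?_
    filter_upwards [self_mem_nhdsWithin] with z hz
    field_simp [show z ≠ 0 from hz]
    ring
  refine (hzero.comp (tendsto_sub_self_nhdsNE l)).congr fun z => ?_
  rw [Function.comp_apply, ← wp_add_of_inLattice hτ hl (z - l), sub_add_cancel]

end WeierstrassP

section Liouville

variable {τ : ℂ} {f : ℂ → ℂ}

lemma apply_eq_apply_of_differentiable_of_periodic (hτ : 0 < τ.im) (hf : Differentiable ℂ f)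
    (h1 : f.Periodic 1) (h2 : f.Periodic τ) (z w : ℂ) : f z = f w := by
  refine hf.apply_eq_apply_of_bounded (IsZLattice.isCompact_range_of_periodic
    (upperPair τ hτ).lattice _ hf.continuous fun z w hw => ?_).isBounded z w
  exact ((mem_lattice_upperPair hτ).mp hw).apply_add h1 h2 z

lemma exists_tendsto_const_of_periodic (hτ : 0 < τ.im)
    (hd : ∀ z, ∀ᶠ w in 𝓝[≠] z, DifferentiableAt ℂ f w)
    (hlim : ∀ z, ∃ c, Tendsto f (𝓝[≠] z) (𝓝 c))
    (h1 : ∀ z, ∀ᶠ w in 𝓝[≠] z, f (w + 1) = f w)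
    (h2 : ∀ z, ∀ᶠ w in 𝓝[≠] z, f (w + τ) = f w) :
    ∃ c, ∀ z, Tendsto f (𝓝[≠] z) (𝓝 c) := by
  obtain ⟨F, hFd, hF⟩ := exists_differentiable_extension hd hlim
  have periodic {a : ℂ} (ha : ∀ z, ∀ᶠ w in 𝓝[≠] z, f (w + a) = f w) : F.Periodic a := fun z => by
    simpa using apply_add_eq_of_tendsto (m := 1) hF continuous_one (by simpa using ha) z
  exact ⟨F 0, fun z => apply_eq_apply_of_differentiable_of_periodic hτ hFd (periodic h1)
    (periodic h2) z 0 ▸ hF z⟩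

end Liouville

section WeierstrassZeta

variable {zeta : ℂ → ℂ → ℂ} {τ : ℂ}

namespace IsWeierstrassZeta

lemma exists_quasiPeriod (hzeta : IsWeierstrassZeta zeta) (hτ : 0 < τ.im) {l : ℂ}
    (hl : InLattice τ l) : ∃ c, ∀ z, ¬ InLattice τ z → zeta τ (z + l) = zeta τ z + c := by
  obtain ⟨-, hd, -⟩ := hzeta τ hτ
  have hderiv (z : ℂ) (hz : ¬ InLattice τ z) :
      HasDerivAt (fun z => zeta τ (z + l) - zeta τ z) 0 z := by
    refine (((hd (z + l) (mt (InLattice.add_iff hl).mp hz)).comp_add_const z l).sub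
      (hd z hz)).congr_deriv ?_
    rw [wp_add_of_inLattice hτ hl, sub_self]
  obtain ⟨c, hc⟩ := (isOpen_setOf_not_inLattice hτ).exists_is_const_of_deriv_eq_zero
    (isPreconnected_setOf_not_inLattice τ)
    (fun z hz => (hderiv z hz).differentiableAt.differentiableWithinAt)
    fun z hz => (hderiv z hz).deriv
  exact ⟨c, fun z hz => eq_add_of_sub_eq' (hc z hz)⟩

lemma tendsto_sub_inv_div (hzeta : IsWeierstrassZeta zeta) (hτ : 0 < τ.im) :
    Tendsto (fun z => (zeta τ z - z⁻¹) / z) (𝓝[≠] 0) (𝓝 0) := by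
  obtain ⟨-, hd, hlim⟩ := hzeta τ hτ
  set R : ℂ → ℂ := fun z => zeta τ z - z⁻¹
  have hderiv : ∀ᶠ z in 𝓝[≠] 0, HasDerivAt R (-(wp τ z - z⁻¹ ^ 2)) z := by
    filter_upwards [eventually_not_inLattice_nhdsNE hτ 0, self_mem_nhdsWithin] with z hz hz0
    refine ((hd z hz).sub (hasDerivAt_inv hz0)).congr_deriv ?_
    rw [inv_pow]
    ring
  have han : AnalyticAt ℂ (Function.update R 0 0) 0 :=
    analyticAt_update_of_tendsto (hderiv.mono fun _ h => h.differentiableAt) hlim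
  have hupdate := Function.update_eventuallyEq_nhdsNE R 0 0 0
  have hzero : deriv (Function.update R 0 0) 0 = 0 := by
    refine tendsto_nhds_unique (han.deriv.continuousAt.continuousWithinAt (s := {0}ᶜ)) ?_
    have hneg := (tendsto_wp_sub_inv_sq hτ).neg
    rw [neg_zero] at hneg
    refine hneg.congr' ?_
    filter_upwards [hderiv, eventually_nhdsNE_eventually_nhds_iff.2 hupdate] with z hz heq
    rw [EventuallyEq.deriv_eq heq, hz.deriv]
  have hslope := han.differentiableAt.hasDerivAt.tendsto_slope
  rw [hzero] at hslope
  refine hslope.congr' ?_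
  filter_upwards [hupdate] with z hz
  rw [slope_def_field, hz, Function.update_self, sub_zero, sub_zero]

lemma tendsto_sub_mul (hzeta : IsWeierstrassZeta zeta) (hτ : 0 < τ.im) {l : ℂ}
    (hl : InLattice τ l) : Tendsto (fun z => (z - l) * zeta τ z) (𝓝[≠] l) (𝓝 1) := by
  obtain ⟨c, hc⟩ := hzeta.exists_quasiPeriod hτ hl
  have hzero : Tendsto (fun z => z * (zeta τ z + c)) (𝓝[≠] 0) (𝓝 1) := by
    have hid : Tendsto (fun z : ℂ => z) (𝓝[≠] 0) (𝓝 0) := continuous_id.continuousWithinAt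
    have hlim := (hid.mul ((hzeta τ hτ).2.2.add_const c)).add_const 1
    rw [zero_mul, zero_add] at hlim
    refine hlim.congr' ?_
    filter_upwards [self_mem_nhdsWithin] with z hz
    field_simp [show z ≠ 0 from hz]
    ring
  refine (hzero.comp (tendsto_sub_self_nhdsNE l)).congr' ?_
  have hoff := (tendsto_sub_self_nhdsNE l).eventually (eventually_not_inLattice_nhdsNE hτ 0)
  filter_upwards [hoff] with z hz
  simp only [Function.comp_apply, ← hc _ hz, sub_add_cancel]

end IsWeierstrassZeta

end WeierstrassZeta

section AdditionTheorem

variable {zeta : ℂ → ℂ → ℂ} {τ v : ℂ}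

/-- The function `u ↦ (ζ(u + v) - ζ(u) - ζ(v))² - ℘(u) - ℘(u + v)`, which the addition theorem for
`ζ` identifies with the constant `℘(v)`. -/
def additionDefect (zeta : ℂ → ℂ → ℂ) (τ v u : ℂ) : ℂ :=
  (zeta τ (u + v) - zeta τ u - zeta τ v) ^ 2 - wp τ u - wp τ (u + v)

lemma eventually_not_inLattice_and_add_nhdsNE (hτ : 0 < τ.im) (v z : ℂ) :
    ∀ᶠ u in 𝓝[≠] z, ¬ InLattice τ u ∧ ¬ InLattice τ (u + v) :=
  (eventually_not_inLattice_nhdsNE hτ z).and <|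
    map_add_right_nhdsNE.le (eventually_not_inLattice_nhdsNE hτ (z + v))

namespace IsWeierstrassZeta

lemma differentiableAt_additionDefect (hzeta : IsWeierstrassZeta zeta) (hτ : 0 < τ.im) {u : ℂ}
    (hu : ¬ InLattice τ u ∧ ¬ InLattice τ (u + v)) :
    DifferentiableAt ℂ (additionDefect zeta τ v) u := by
  obtain ⟨-, hd, -⟩ := hzeta τ hτ
  exact (((((hd _ hu.2).comp_add_const u v).sub (hd u hu.1)).sub_const (zeta τ v)).pow 2
    |>.sub (hasDerivAt_wp hτ hu.1)
    |>.sub ((hasDerivAt_wp hτ hu.2).comp_add_const u v)).differentiableAt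

lemma additionDefect_add_of_inLattice (hzeta : IsWeierstrassZeta zeta) (hτ : 0 < τ.im) {l : ℂ}
    (hl : InLattice τ l) {u : ℂ} (hu : ¬ InLattice τ u ∧ ¬ InLattice τ (u + v)) :
    additionDefect zeta τ v (u + l) = additionDefect zeta τ v u := by
  obtain ⟨c, hc⟩ := hzeta.exists_quasiPeriod hτ hl
  rw [additionDefect, additionDefect, add_right_comm u l v, hc u hu.1, hc _ hu.2,
    wp_add_of_inLattice hτ hl, wp_add_of_inLattice hτ hl]
  ring

lemma additionDefect_neg_sub (hzeta : IsWeierstrassZeta zeta) (hτ : 0 < τ.im) (u : ℂ) :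
    additionDefect zeta τ v (-v - u) = additionDefect zeta τ v u := by
  obtain ⟨hodd, -, -⟩ := hzeta τ hτ
  rw [additionDefect, additionDefect, show -v - u + v = -u by ring, show -v - u = -(u + v) by ring,
    hodd, hodd, wp_neg hτ, wp_neg hτ]
  ring

/-- With `ζ(u) = u⁻¹ + o(u)` and `℘(u) = u⁻² + o(1)`, the poles cancel and what is left of the
square is `-2 (ζ(u + v) - ζ(v)) / u → 2 ℘(v)`. -/
lemma tendsto_additionDefect_zero (hzeta : IsWeierstrassZeta zeta) (hτ : 0 < τ.im)
    (hv : ¬ InLattice τ v) : Tendsto (additionDefect zeta τ v) (𝓝[≠] 0) (𝓝 (wp τ v)) := by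
  obtain ⟨-, hd, hlim⟩ := hzeta τ hτ
  have hζ : HasDerivAt (fun u => zeta τ (u + v)) (-wp τ v) 0 := by
    simpa using (hd (0 + v) (by rwa [zero_add])).comp_add_const 0 v
  have h℘ : Tendsto (fun u => wp τ (u + v)) (𝓝[≠] 0) (𝓝 (wp τ v)) := by
    have := ((hasDerivAt_wp hτ (z := 0 + v) (by rwa [zero_add])).comp_add_const 0 v).continuousAt
    simpa using this.continuousWithinAt.tendsto
  have hζv : Tendsto (fun u => zeta τ (u + v)) (𝓝[≠] 0) (𝓝 (zeta τ v)) := by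
    simpa using hζ.continuousAt.continuousWithinAt.tendsto
  have hsum := (((hζv.sub_const (zeta τ v)).sub hlim).pow 2).sub (hζ.tendsto_slope.const_mul 2)
    |>.add ((hzeta.tendsto_sub_inv_div hτ).const_mul 2)
    |>.sub ((tendsto_wp_sub_inv_sq hτ).add h℘)
  convert hsum.congr' ?_ using 2
  · ring
  · filter_upwards [self_mem_nhdsWithin] with u hu
    rw [additionDefect, slope_def_field, zero_add, sub_zero]
    field_simp [show u ≠ 0 from hu]
    ring

lemma tendsto_additionDefect_of_inLattice (hzeta : IsWeierstrassZeta zeta) (hτ : 0 < τ.im)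
    (hv : ¬ InLattice τ v) {l : ℂ} (hl : InLattice τ l) :
    Tendsto (additionDefect zeta τ v) (𝓝[≠] l) (𝓝 (wp τ v)) := by
  refine ((hzeta.tendsto_additionDefect_zero hτ hv).comp (tendsto_sub_self_nhdsNE l)).congr' ?_
  filter_upwards [eventually_not_inLattice_and_add_nhdsNE hτ v l] with u hu
  rw [Function.comp_apply, sub_eq_add_neg, hzeta.additionDefect_add_of_inLattice hτ hl.neg hu]

lemma exists_tendsto_additionDefect (hzeta : IsWeierstrassZeta zeta) (hτ : 0 < τ.im)
    (hv : ¬ InLattice τ v) (z : ℂ) : ∃ c, Tendsto (additionDefect zeta τ v) (𝓝[≠] z) (𝓝 c) := by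
  by_cases hz : InLattice τ z
  · exact ⟨_, hzeta.tendsto_additionDefect_of_inLattice hτ hv hz⟩
  by_cases hzv : InLattice τ (z + v)
  · have hl : InLattice τ (-v - z) := by simpa [sub_eq_add_neg] using hzv.neg
    exact ⟨_, ((hzeta.tendsto_additionDefect_of_inLattice hτ hv hl).comp
      map_subLeft_nhdsNE.le).congr (hzeta.additionDefect_neg_sub hτ)⟩
  · exact ⟨_, (hzeta.differentiableAt_additionDefect hτ ⟨hz, hzv⟩).continuousAt.continuousWithinAt⟩

theorem additionDefect_eq (hzeta : IsWeierstrassZeta zeta) (hτ : 0 < τ.im)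
    (hv : ¬ InLattice τ v) {u : ℂ} (hu : ¬ InLattice τ u) (huv : ¬ InLattice τ (u + v)) :
    additionDefect zeta τ v u = wp τ v := by
  have hreg := eventually_not_inLattice_and_add_nhdsNE hτ v
  obtain ⟨c, hc⟩ := exists_tendsto_const_of_periodic hτ
    (fun z => (hreg z).mono fun w => hzeta.differentiableAt_additionDefect hτ)
    (hzeta.exists_tendsto_additionDefect hτ hv)
    (fun z => (hreg z).mono fun w => hzeta.additionDefect_add_of_inLattice hτ (.one τ))
    (fun z => (hreg z).mono fun w => hzeta.additionDefect_add_of_inLattice hτ (.self τ))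
  calc additionDefect zeta τ v u
      = c := tendsto_nhds_unique (hzeta.differentiableAt_additionDefect hτ
          ⟨hu, huv⟩).continuousAt.continuousWithinAt (hc u)
    _ = wp τ v := tendsto_nhds_unique (hc 0) (hzeta.tendsto_additionDefect_zero hτ hv)

theorem duplication (hzeta : IsWeierstrassZeta zeta) (hτ : 0 < τ.im) {p : ℂ}
    (h2p : ¬ InLattice τ (2 * p)) :
    2 * (zeta τ (2 * p) - 2 * zeta τ p) * (wp τ p - wp τ (2 * p)) =
      wpd τ p + wpd τ (2 * p) := by
  have hp : ¬ InLattice τ p := mt InLattice.two_mul h2p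
  rw [two_mul p] at h2p ⊢
  obtain ⟨-, hd, -⟩ := hzeta τ hτ
  have hderiv : HasDerivAt (additionDefect zeta τ p)
      (2 * (zeta τ (p + p) - zeta τ p - zeta τ p) * (-wp τ (p + p) - -wp τ p)
        - wpd τ p - wpd τ (p + p)) p := by
    refine (((((hd _ h2p).comp_add_const p p).sub (hd p hp)).sub_const (zeta τ p)).pow 2
      |>.sub (hasDerivAt_wp hτ hp)
      |>.sub ((hasDerivAt_wp hτ h2p).comp_add_const p p)).congr_deriv ?_
    norm_num
  have hconst : additionDefect zeta τ p =ᶠ[𝓝 p] fun _ => wp τ p := by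
    filter_upwards [eventually_not_inLattice hτ hp,
      (map_add_right_nhds p p).le (eventually_not_inLattice hτ h2p)] with u hu hup
    exact hzeta.additionDefect_eq hτ hp hu hup
  have hzero := hderiv.unique ((hasDerivAt_const p _).congr_of_eventuallyEq hconst)
  linear_combination hzero

end IsWeierstrassZeta

end AdditionTheorem

section ThetaDerivatives

/-- The `n`-th summand of the series for `∂ᵏθ/∂zᵏ`. -/
def thetaDerivTerm (k : ℕ) (n : ℤ) (z τ : ℂ) : ℂ :=
  (2 * π * I * n) ^ k * jacobiTheta₂_term n z τ

/-- The iterated partial derivative `∂ᵏθ/∂zᵏ` of the Jacobi theta function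
`θ(z, τ) = ∑ₙ exp(2πinz + πin²τ)`, differentiated term by term. -/
def thetaDeriv (k : ℕ) (z τ : ℂ) : ℂ := ∑' n : ℤ, thetaDerivTerm k n z τ

lemma thetaDeriv_zero (z τ : ℂ) : thetaDeriv 0 z τ = jacobiTheta₂ z τ := by
  simp [thetaDeriv, thetaDerivTerm, jacobiTheta₂]

lemma thetaDeriv_one (z τ : ℂ) : thetaDeriv 1 z τ = jacobiTheta₂' z τ := by
  simp [thetaDeriv, thetaDerivTerm, jacobiTheta₂', jacobiTheta₂'_term]

/-- The total derivative of `thetaDerivTerm k n`: as `(2πin)² / (4πi) = πin²`, the heat equation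
`4πi ∂/∂τ = ∂²/∂z²` holds term by term. -/
def thetaDerivTermFDeriv (k : ℕ) (n : ℤ) (z τ : ℂ) : ℂ × ℂ →L[ℂ] ℂ :=
  thetaDerivTerm (k + 1) n z τ • ContinuousLinearMap.fst ℂ ℂ ℂ +
    (thetaDerivTerm (k + 2) n z τ / (4 * π * I)) • ContinuousLinearMap.snd ℂ ℂ ℂ

lemma hasFDerivAt_thetaDerivTerm (k : ℕ) (n : ℤ) (z τ : ℂ) :
    HasFDerivAt (fun p : ℂ × ℂ => thetaDerivTerm k n p.1 p.2) (thetaDerivTermFDeriv k n z τ)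
      (z, τ) := by
  refine ((hasFDerivAt_jacobiTheta₂_term n z τ).const_mul ((2 * π * I * n) ^ k)).congr_fderiv ?_
  have snd_coeff : (2 * π * I * n) ^ k * jacobiTheta₂_term n z τ * (π * I * n ^ 2) =
      thetaDerivTerm (k + 2) n z τ / (4 * π * I) := by
    rw [thetaDerivTerm]
    field_simp
    ring
  rw [thetaDerivTermFDeriv, ← snd_coeff, thetaDerivTerm, jacobiTheta₂_term_fderiv,
    ← jacobiTheta₂_term]
  module

lemma exists_summable_norm_thetaDerivTerm_le (k : ℕ) (S : ℝ) {T : ℝ} (hT : 0 < T) :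
    ∃ u : ℤ → ℝ, Summable u ∧ ∀ n z τ, |im z| ≤ S → T ≤ im τ → ‖thetaDerivTerm k n z τ‖ ≤ u n := by
  refine ⟨_, (summable_pow_mul_jacobiTheta₂_term_bound S hT k).mul_left ((2 * π) ^ k),
    fun n z τ hz hτ => ?_⟩
  have hcoeff : ‖(2 * π * I * n : ℂ) ^ k‖ = (2 * π) ^ k * |(n : ℝ)| ^ k := by
    simp [abs_of_pos Real.pi_pos, mul_pow]
  rw [thetaDerivTerm, norm_mul, hcoeff, mul_assoc, ← Int.cast_abs]
  gcongr
  exact norm_jacobiTheta₂_term_le hT hz hτ n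

lemma hasSum_thetaDerivTerm (k : ℕ) (z : ℂ) {τ : ℂ} (hτ : 0 < τ.im) :
    HasSum (fun n => thetaDerivTerm k n z τ) (thetaDeriv k z τ) := by
  obtain ⟨u, hu, hle⟩ := exists_summable_norm_thetaDerivTerm_le k |im z| hτ
  exact (hu.of_norm_bounded fun n => hle n z τ le_rfl le_rfl).hasSum

lemma norm_thetaDerivTermFDeriv_le (k : ℕ) (n : ℤ) (z τ : ℂ) :
    ‖thetaDerivTermFDeriv k n z τ‖ ≤
      ‖thetaDerivTerm (k + 1) n z τ‖ + ‖thetaDerivTerm (k + 2) n z τ‖ := by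
  have hπ : 1 ≤ ‖(4 * π * I : ℂ)‖ := by
    simpa [abs_of_pos Real.pi_pos] using by linarith [Real.two_le_pi]
  refine (norm_add_le _ _).trans (add_le_add ?_ ?_)
  · rw [norm_smul]
    exact mul_le_of_le_one_right (norm_nonneg _) (ContinuousLinearMap.norm_fst_le ℂ ℂ ℂ)
  · rw [norm_smul, norm_div]
    exact (mul_le_of_le_one_right (by positivity) (ContinuousLinearMap.norm_snd_le ℂ ℂ ℂ)).trans
      (div_le_self (norm_nonneg _) hπ)

lemma hasSum_thetaDerivTermFDeriv (k : ℕ) (z : ℂ) {τ : ℂ} (hτ : 0 < τ.im) :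
    HasSum (fun n => thetaDerivTermFDeriv k n z τ)
      (thetaDeriv (k + 1) z τ • ContinuousLinearMap.fst ℂ ℂ ℂ +
        (thetaDeriv (k + 2) z τ / (4 * π * I)) • ContinuousLinearMap.snd ℂ ℂ ℂ) :=
  ((hasSum_thetaDerivTerm (k + 1) z hτ).smul_const (ContinuousLinearMap.fst ℂ ℂ ℂ)).add
    (((hasSum_thetaDerivTerm (k + 2) z hτ).div_const (4 * π * I)).smul_const
      (ContinuousLinearMap.snd ℂ ℂ ℂ))

theorem hasFDerivAt_thetaDeriv (k : ℕ) (z : ℂ) {τ : ℂ} (hτ : 0 < τ.im) :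
    HasFDerivAt (fun p : ℂ × ℂ => thetaDeriv k p.1 p.2)
      (thetaDeriv (k + 1) z τ • ContinuousLinearMap.fst ℂ ℂ ℂ +
        (thetaDeriv (k + 2) z τ / (4 * π * I)) • ContinuousLinearMap.snd ℂ ℂ ℂ) (z, τ) := by
  obtain ⟨T, hT, hτT⟩ := exists_between hτ
  obtain ⟨S, hzS⟩ := exists_gt |im z|
  set V : Set (ℂ × ℂ) := {u | |im u| < S} ×ˢ {v | T < im v}
  have hVo : IsOpen V :=
    (isOpen_lt (by fun_prop) continuous_const).prod (isOpen_lt continuous_const (by fun_prop))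
  have hVp : IsPreconnected V := by
    refine (Convex.isPreconnected ?_).prod (convex_halfSpace_im_gt T).isPreconnected
    simpa only [abs_lt] using! (convex_halfSpace_im_gt _).inter (convex_halfSpace_im_lt _)
  obtain ⟨u₁, hu₁, hle₁⟩ := exists_summable_norm_thetaDerivTerm_le (k + 1) S hT
  obtain ⟨u₂, hu₂, hle₂⟩ := exists_summable_norm_thetaDerivTerm_le (k + 2) S hT
  have hmem : (z, τ) ∈ V := ⟨hzS, hτT⟩
  have hle (n : ℤ) (p : ℂ × ℂ) (hp : p ∈ V) :
      ‖thetaDerivTermFDeriv k n p.1 p.2‖ ≤ u₁ n + u₂ n :=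
    (norm_thetaDerivTermFDeriv_le k n p.1 p.2).trans
      (add_le_add (hle₁ n p.1 p.2 hp.1.le hp.2.le) (hle₂ n p.1 p.2 hp.1.le hp.2.le))
  have h := hasFDerivAt_tsum_of_isPreconnected (hu₁.add hu₂) hVo hVp
    (fun n p _ => hasFDerivAt_thetaDerivTerm k n p.1 p.2) hle hmem
    (hasSum_thetaDerivTerm k z hτ).summable hmem
  exact h.congr_fderiv (hasSum_thetaDerivTermFDeriv k z hτ).tsum_eq

lemma hasDerivAt_thetaDeriv_comp (k : ℕ) {g : ℂ → ℂ} {g' τ : ℂ} (hτ : 0 < τ.im)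
    (hg : HasDerivAt g g' τ) :
    HasDerivAt (fun s => thetaDeriv k (g s) s)
      (thetaDeriv (k + 1) (g τ) τ * g' + thetaDeriv (k + 2) (g τ) τ / (4 * π * I)) τ :=
  ((hasFDerivAt_thetaDeriv k (g τ) hτ).comp_hasDerivAt (f := fun s => (g s, s)) τ
    (hg.prodMk (hasDerivAt_id τ))).congr_deriv (by simp)

lemma hasDerivAt_thetaDeriv (k : ℕ) (z : ℂ) {τ : ℂ} (hτ : 0 < τ.im) :
    HasDerivAt (fun z => thetaDeriv k z τ) (thetaDeriv (k + 1) z τ) z :=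
  ((hasFDerivAt_thetaDeriv k z hτ).comp_hasDerivAt (f := fun w => (w, τ)) z
    ((hasDerivAt_id z).prodMk (hasDerivAt_const z τ))).congr_deriv (by simp)

end ThetaDerivatives

section FourierExpansion

variable {f : ℂ → ℂ}

lemma intervalIntegral_add_of_periodic_one (hf : Differentiable ℂ f) (hf1 : f.Periodic 1) (w : ℂ) :
    ∫ x in (0 : ℝ)..1, f (x + w) = ∫ x in (0 : ℝ)..1, f x := by
  obtain ⟨G, hG⟩ := hf.isExactOn_univ
  have integral_eq (w : ℂ) : ∫ x in (0 : ℝ)..1, f (x + w) = G (w + 1) - G w := by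
    have hd (x : ℝ) : HasDerivAt (fun y : ℝ => G (y + w)) (f (x + w)) x :=
      ((hG (x + w) trivial).comp_add_const (x : ℂ) w).comp_ofReal
    have hc : Continuous fun x : ℝ => f (x + w) := hf.continuous.comp (by fun_prop)
    rw [intervalIntegral.integral_eq_sub_of_hasDerivAt (fun x _ => hd x)
      (hc.intervalIntegrable 0 1)]
    simp [add_comm]
  have hd (w : ℂ) : HasDerivAt (fun w => G (w + 1) - G w) 0 w :=
    (((hG (w + 1) trivial).comp_add_const w 1).sub (hG w trivial)).congr_deriv (by simp [hf1 w])
  have h0 := integral_eq 0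
  simp only [add_zero] at h0
  rw [integral_eq w, h0]
  exact is_const_of_deriv_eq_zero (fun w => (hd w).differentiableAt) (fun w => (hd w).deriv) w 0

/-- The Fourier coefficients `∫₀¹ f(x) exp(-2πinx) dx` of the restriction of `f` to the real
line. -/
def realFourierCoeff (f : ℂ → ℂ) (n : ℤ) : ℂ :=
  ∫ x in (0 : ℝ)..1, cexp (-(2 * π * I * n * x)) * f x

lemma intervalIntegral_cexp_mul_add (hf : Differentiable ℂ f) (hf1 : f.Periodic 1) (n : ℤ) (w : ℂ) :
    ∫ x in (0 : ℝ)..1, cexp (-(2 * π * I * n * (x + w))) * f (x + w) = realFourierCoeff f n := by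
  have hper : (fun z => cexp (-(2 * π * I * n * z)) * f z).Periodic 1 := fun z => by
    have hn : -(2 * π * I * n * (z + 1)) = -(2 * π * I * n * z) + (-n : ℤ) * (2 * π * I) := by
      push_cast
      ring
    simp only [hf1 z, hn, exp_add, exp_int_mul_two_pi_mul_I, mul_one]
  exact intervalIntegral_add_of_periodic_one (by fun_prop) hper w

lemma hasSum_realFourierCoeff_mul_cexp (hf : Differentiable ℂ f) (hf1 : f.Periodic 1) {w : ℂ}
    (hs : Summable fun n => realFourierCoeff f n * cexp (2 * π * I * n * w)) :
    HasSum (fun n => realFourierCoeff f n * cexp (2 * π * I * n * w)) (f w) := by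
  have hper : (fun x : ℝ => f (x + w)).Periodic 1 := fun x => by
    simpa only [ofReal_add, ofReal_one, add_right_comm] using hf1 (x + w)
  set g : C(UnitAddCircle, ℂ) := ⟨hper.lift, continuous_coinduced_dom.mpr
    (hf.continuous.comp (by fun_prop))⟩
  have hg (x : ℝ) : g x = f (x + w) := hper.lift_coe x
  have hcoeff (n : ℤ) : fourierCoeff g n = realFourierCoeff f n * cexp (2 * π * I * n * w) := by
    rw [fourierCoeff_eq_intervalIntegral g n 0, ← intervalIntegral_cexp_mul_add hf hf1 n w,
      ← intervalIntegral.integral_mul_const]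
    simp only [hg, fourier_coe_apply, one_div, inv_one, one_smul, zero_add, smul_eq_mul]
    refine intervalIntegral.integral_congr fun x _ => ?_
    rw [mul_right_comm (cexp _) (f _) (cexp _), ← Complex.exp_add]
    congr 2
    push_cast
    ring
  have h := has_pointwise_sum_fourier_series_of_summable (f := g) (by rwa [funext hcoeff]) 0
  simpa [hcoeff, ← QuotientAddGroup.mk_zero, hg] using h

end FourierExpansion

section ThetaFunctionalEquation

variable {f : ℂ → ℂ} {τ : ℂ}

lemma realFourierCoeff_add_one (hf : Differentiable ℂ f) (hf1 : f.Periodic 1)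
    (hfτ : ∀ z, f (z + τ) = cexp (-π * I * (τ + 2 * z)) * f z) (n : ℤ) :
    realFourierCoeff f (n + 1) = cexp (π * I * (2 * n + 1) * τ) * realFourierCoeff f n := by
  rw [← intervalIntegral_cexp_mul_add hf hf1 n τ, realFourierCoeff,
    ← intervalIntegral.integral_const_mul]
  refine intervalIntegral.integral_congr fun x _ => ?_
  simp only [hfτ, ← mul_assoc, ← Complex.exp_add]
  congr 2
  push_cast
  ring

lemma realFourierCoeff_eq (hf : Differentiable ℂ f) (hf1 : f.Periodic 1)
    (hfτ : ∀ z, f (z + τ) = cexp (-π * I * (τ + 2 * z)) * f z) (n : ℤ) :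
    realFourierCoeff f n = cexp (π * I * n ^ 2 * τ) * realFourierCoeff f 0 := by
  have succ := realFourierCoeff_add_one hf hf1 hfτ
  have exp_succ (k : ℤ) : cexp (π * I * (k + 1 : ℤ) ^ 2 * τ) =
      cexp (π * I * (2 * k + 1) * τ) * cexp (π * I * k ^ 2 * τ) := by
    rw [← Complex.exp_add]
    congr 1
    push_cast
    ring
  induction n using Int.induction_on with
  | zero => simp
  | succ k ih => rw [succ, ih, exp_succ, ← mul_assoc]
  | pred k ih =>
    have hk := succ (-k - 1)
    have he := exp_succ (-k - 1)
    rw [sub_add_cancel] at hk he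
    rw [ih, he, mul_assoc] at hk
    exact (mul_left_cancel₀ (exp_ne_zero _) hk).symm

theorem exists_eq_const_mul_jacobiTheta₂ (hτ : 0 < τ.im) (hf : Differentiable ℂ f)
    (hf1 : f.Periodic 1) (hfτ : ∀ z, f (z + τ) = cexp (-π * I * (τ + 2 * z)) * f z) :
    ∃ c, ∀ z, f z = c * jacobiTheta₂ z τ := by
  refine ⟨realFourierCoeff f 0, fun z => ?_⟩
  have hterm (n : ℤ) : realFourierCoeff f n * cexp (2 * π * I * n * z) =
      realFourierCoeff f 0 * jacobiTheta₂_term n z τ := by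
    rw [realFourierCoeff_eq hf hf1 hfτ n, jacobiTheta₂_term, Complex.exp_add]
    ring
  have hsum := (hasSum_jacobiTheta₂_term z hτ).mul_left (realFourierCoeff f 0)
  simp only [← hterm] at hsum
  exact (hasSum_realFourierCoeff_mul_cexp hf hf1 hsum.summable).unique hsum

lemma integral_jacobiTheta₂ (hτ : 0 < τ.im) : ∫ x in (0 : ℝ)..1, jacobiTheta₂ x τ = 1 := by
  have integral_term (n : ℤ) :
      ∫ x in (0 : ℝ)..1, jacobiTheta₂_term n x τ = if n = 0 then 1 else 0 := by
    split_ifs with hn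
    · simp [hn, jacobiTheta₂_term]
    · have hc : (2 * π * I * n : ℂ) ≠ 0 := by simp [hn, Real.pi_ne_zero]
      simp only [jacobiTheta₂_term, Complex.exp_add, intervalIntegral.integral_mul_const,
        integral_exp_mul_complex hc]
      simp [mul_comm _ (n : ℂ), exp_int_mul_two_pi_mul_I]
  have hsum : HasSum (fun n : ℤ => ∫ x in (0 : ℝ)..1, jacobiTheta₂_term n x τ)
      (∫ x in (0 : ℝ)..1, jacobiTheta₂ x τ) := by
    refine intervalIntegral.hasSum_integral_of_dominated_convergence
      (fun n _ => ‖jacobiTheta₂_term n 0 τ‖) (fun n => ?_) (fun n => ?_) ?_ ?_ ?_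
    · exact Continuous.aestronglyMeasurable (by unfold jacobiTheta₂_term; fun_prop)
    · exact .of_forall fun x _ => by simp [norm_jacobiTheta₂_term]
    · exact .of_forall fun x _ => (hasSum_jacobiTheta₂_term 0 hτ).summable.norm
    · exact intervalIntegrable_const
    · exact .of_forall fun x _ => hasSum_jacobiTheta₂_term x hτ
  simp only [integral_term] at hsum
  exact hsum.unique (hasSum_ite_eq 0 1)

lemma exists_jacobiTheta₂_ne_zero (hτ : 0 < τ.im) : ∃ z, jacobiTheta₂ z τ ≠ 0 := by
  by_contra! h
  simpa [h] using integral_jacobiTheta₂ hτ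

end ThetaFunctionalEquation

section ShiftedTheta

variable {τ : ℂ}

/-- The `k`-th derivative of `z ↦ θ(z + (1 + τ)/2, τ)`, the translate of the Jacobi theta function
which vanishes on the lattice; it differs from the odd theta function by an exponential factor. -/
def shiftedTheta (k : ℕ) (τ z : ℂ) : ℂ := thetaDeriv k (z + (1 + τ) / 2) τ

lemma hasDerivAt_shiftedTheta (k : ℕ) (hτ : 0 < τ.im) (z : ℂ) :
    HasDerivAt (shiftedTheta k τ) (shiftedTheta (k + 1) τ z) z :=
  (hasDerivAt_thetaDeriv k (z + (1 + τ) / 2) hτ).comp_add_const z ((1 + τ) / 2)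

lemma deriv_shiftedTheta (k : ℕ) (hτ : 0 < τ.im) :
    deriv (shiftedTheta k τ) = shiftedTheta (k + 1) τ :=
  funext fun z => (hasDerivAt_shiftedTheta k hτ z).deriv

lemma differentiable_shiftedTheta (k : ℕ) (hτ : 0 < τ.im) : Differentiable ℂ (shiftedTheta k τ) :=
  fun z => (hasDerivAt_shiftedTheta k hτ z).differentiableAt

lemma hasDerivAt_shiftedTheta_comp (k : ℕ) {g : ℂ → ℂ} {g' : ℂ} (hτ : 0 < τ.im)
    (hg : HasDerivAt g g' τ) :
    HasDerivAt (fun s => shiftedTheta k s (g s))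
      (shiftedTheta (k + 1) τ (g τ) * (g' + 1 / 2) +
        shiftedTheta (k + 2) τ (g τ) / (4 * π * I)) τ :=
  hasDerivAt_thetaDeriv_comp k hτ (hg.add (((hasDerivAt_id τ).const_add 1).div_const 2))

lemma shiftedTheta_zero_eq (τ z : ℂ) : shiftedTheta 0 τ z = jacobiTheta₂ (z + (1 + τ) / 2) τ :=
  thetaDeriv_zero _ _

lemma shiftedTheta_one_eq (τ z : ℂ) : shiftedTheta 1 τ z = jacobiTheta₂' (z + (1 + τ) / 2) τ :=
  thetaDeriv_one _ _

lemma cexp_shifted_multiplier (τ z : ℂ) :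
    cexp (-π * I * (τ + 2 * (z + (1 + τ) / 2))) = -cexp (-(2 * π * I * (z + τ))) := by
  rw [show -π * I * (τ + 2 * (z + (1 + τ) / 2)) = -(2 * π * I * (z + τ)) - π * I by ring,
    exp_sub_pi_mul_I]

lemma periodic_shiftedTheta_zero (τ : ℂ) : (shiftedTheta 0 τ).Periodic 1 := fun z => by
  rw [shiftedTheta_zero_eq, shiftedTheta_zero_eq, add_right_comm, jacobiTheta₂_add_left]

lemma shiftedTheta_zero_add (τ z : ℂ) :
    shiftedTheta 0 τ (z + τ) = -cexp (-(2 * π * I * (z + τ))) * shiftedTheta 0 τ z := by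
  rw [shiftedTheta_zero_eq, shiftedTheta_zero_eq, add_right_comm, jacobiTheta₂_add_left',
    cexp_shifted_multiplier]

lemma periodic_shiftedTheta_one (τ : ℂ) : (shiftedTheta 1 τ).Periodic 1 := fun z => by
  rw [shiftedTheta_one_eq, shiftedTheta_one_eq, add_right_comm, jacobiTheta₂'_add_left]

lemma shiftedTheta_one_add (τ z : ℂ) :
    shiftedTheta 1 τ (z + τ) = -cexp (-(2 * π * I * (z + τ))) *
      (shiftedTheta 1 τ z - 2 * π * I * shiftedTheta 0 τ z) := by
  rw [shiftedTheta_one_eq, shiftedTheta_one_eq, shiftedTheta_zero_eq, add_right_comm,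
    jacobiTheta₂'_add_left', cexp_shifted_multiplier]

lemma cexp_neg_shifted_multiplier (τ z : ℂ) :
    cexp (-π * I * (τ + 2 * -(z + (1 + τ) / 2))) = -cexp (2 * π * I * z) := by
  rw [show -π * I * (τ + 2 * -(z + (1 + τ) / 2)) = 2 * π * I * z + π * I by ring,
    exp_add_pi_mul_I]

lemma shiftedTheta_zero_neg (τ z : ℂ) :
    shiftedTheta 0 τ (-z) = -cexp (2 * π * I * z) * shiftedTheta 0 τ z := by
  rw [shiftedTheta_zero_eq, shiftedTheta_zero_eq,
    show -z + (1 + τ) / 2 = -(z + (1 + τ) / 2) + τ + 1 by ring, jacobiTheta₂_add_left,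
    jacobiTheta₂_add_left', cexp_neg_shifted_multiplier, jacobiTheta₂_neg_left]

lemma shiftedTheta_one_neg (τ z : ℂ) :
    shiftedTheta 1 τ (-z) =
      cexp (2 * π * I * z) * (shiftedTheta 1 τ z + 2 * π * I * shiftedTheta 0 τ z) := by
  rw [shiftedTheta_one_eq, shiftedTheta_one_eq, shiftedTheta_zero_eq,
    show -z + (1 + τ) / 2 = -(z + (1 + τ) / 2) + τ + 1 by ring, jacobiTheta₂'_add_left,
    jacobiTheta₂'_add_left', cexp_neg_shifted_multiplier, jacobiTheta₂_neg_left,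
    jacobiTheta₂'_neg_left]
  ring

lemma shiftedTheta_zero_of_inLattice {l : ℂ} (hl : InLattice τ l) : shiftedTheta 0 τ l = 0 := by
  have hzero : shiftedTheta 0 τ 0 = 0 := by
    have h := shiftedTheta_zero_neg τ 0
    rw [neg_zero, mul_zero, exp_zero, neg_one_mul] at h
    exact self_eq_neg.mp h
  have h := hl.apply_add (f := fun z => shiftedTheta 0 τ z = 0)
    (fun z => congrArg (· = 0) (periodic_shiftedTheta_zero τ z))
    (fun z => by simp [shiftedTheta_zero_add, exp_ne_zero]) 0
  rw [zero_add] at h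
  exact h.mpr hzero

lemma eventually_shiftedTheta_ne_zero (hτ : 0 < τ.im) (z : ℂ) :
    ∀ᶠ w in 𝓝[≠] z, shiftedTheta 0 τ w ≠ 0 := by
  have hf : AnalyticOnNhd ℂ (shiftedTheta 0 τ) Set.univ :=
    (differentiable_shiftedTheta 0 hτ).differentiableOn.analyticOnNhd isOpen_univ
  refine not_frequently.mp fun hzero => ?_
  have heq : shiftedTheta 0 τ = 0 := hf.eq_of_frequently_eq analyticOnNhd_const hzero
  obtain ⟨w, hw⟩ := exists_jacobiTheta₂_ne_zero hτ
  refine hw ?_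
  rw [← sub_add_cancel w ((1 + τ) / 2), ← shiftedTheta_zero_eq, heq, Pi.zero_apply]

theorem exists_eq_const_mul_shiftedTheta (hτ : 0 < τ.im) {f : ℂ → ℂ}
    (hd : ∀ z, ¬ InLattice τ z → DifferentiableAt ℂ f z)
    (hlim : ∀ l, InLattice τ l → ∃ c, Tendsto f (𝓝[≠] l) (𝓝 c))
    (h1 : ∀ z, ¬ InLattice τ z → f (z + 1) = f z)
    (h2 : ∀ z, ¬ InLattice τ z → f (z + τ) = -cexp (-(2 * π * I * (z + τ))) * f z) :
    ∃ c, ∀ z, ¬ InLattice τ z → f z = c * shiftedTheta 0 τ z := by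
  have hoff (z : ℂ) := eventually_not_inLattice_nhdsNE hτ z
  have hcont (z : ℂ) (hz : ¬ InLattice τ z) : Tendsto f (𝓝[≠] z) (𝓝 (f z)) :=
    (hd z hz).continuousAt.continuousWithinAt
  obtain ⟨F, hFd, hF⟩ := exists_differentiable_extension (fun z => (hoff z).mono hd) fun z => by
    by_cases hz : InLattice τ z
    exacts [hlim z hz, ⟨f z, hcont z hz⟩]
  have hF1 (z : ℂ) : F (z + 1) = F z := by
    simpa using apply_add_eq_of_tendsto (m := 1) hF continuous_one
      (fun z => (hoff z).mono fun w hw => by simp [h1 w hw]) z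
  have hFτ := apply_add_eq_of_tendsto hF (by fun_prop) fun z => (hoff z).mono h2
  obtain ⟨c, hc⟩ := exists_eq_const_mul_jacobiTheta₂ (f := fun w => F (w - (1 + τ) / 2)) hτ
    (by fun_prop) (fun w => (congrArg F (add_sub_right_comm w 1 _)).trans (hF1 _))
    (fun w => by rw [add_sub_right_comm, hFτ, ← cexp_shifted_multiplier, sub_add_cancel])
  refine ⟨c, fun z hz => ?_⟩
  rw [tendsto_nhds_unique (hcont z hz) (hF z), shiftedTheta_zero_eq, ← hc, add_sub_cancel_right]

end ShiftedTheta

section SimpleZero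

variable {τ : ℂ}

-- At a double zero the product with `℘` would be a holomorphic function satisfying the same
-- functional equations, hence a constant multiple of the theta function.
theorem shiftedTheta_one_zero_ne_zero (hτ : 0 < τ.im) : shiftedTheta 1 τ 0 ≠ 0 := by
  intro h0
  have h1 (l : ℂ) (hl : InLattice τ l) : deriv (shiftedTheta 0 τ) l = 0 := by
    have h := hl.apply_add (f := fun z => shiftedTheta 0 τ z = 0 ∧ shiftedTheta 1 τ z = 0)
      (fun z => by simp only [periodic_shiftedTheta_zero τ z, periodic_shiftedTheta_one τ z])
      (fun z => by simp +contextual [shiftedTheta_zero_add, shiftedTheta_one_add, exp_ne_zero]) 0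
    rw [zero_add] at h
    rw [deriv_shiftedTheta 0 hτ]
    exact (h.mpr ⟨shiftedTheta_zero_of_inLattice (.zero τ), h0⟩).2
  have hlim (l : ℂ) (hl : InLattice τ l) :
      ∃ c, Tendsto (fun z => wp τ z * shiftedTheta 0 τ z) (𝓝[≠] l) (𝓝 c) := by
    obtain ⟨c, hc⟩ := exists_tendsto_div_sub_sq (differentiable_shiftedTheta 0 hτ)
      (shiftedTheta_zero_of_inLattice hl) (h1 l hl)
    refine ⟨_, ((tendsto_sub_sq_mul_wp hτ hl).mul hc).congr' ?_⟩
    filter_upwards [self_mem_nhdsWithin] with z hz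
    field_simp [sub_ne_zero.mpr hz]
  obtain ⟨c, hc⟩ := exists_eq_const_mul_shiftedTheta hτ
    (f := fun z => wp τ z * shiftedTheta 0 τ z)
    (fun z hz => (hasDerivAt_wp hτ hz).differentiableAt.mul (differentiable_shiftedTheta 0 hτ z))
    hlim (fun z _ => by rw [wp_add_of_inLattice hτ (.one τ), periodic_shiftedTheta_zero])
    (fun z _ => by rw [wp_add_of_inLattice hτ (.self τ), shiftedTheta_zero_add, mul_left_comm])
  have hsq : Tendsto (fun z : ℂ => (z - 0) ^ 2 * c) (𝓝[≠] 0) (𝓝 ((0 - 0) ^ 2 * c)) :=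
    Continuous.continuousWithinAt (by fun_prop)
  rw [sub_zero, zero_pow two_ne_zero, zero_mul] at hsq
  refine zero_ne_one (tendsto_nhds_unique hsq
    ((tendsto_sub_sq_mul_wp hτ (.zero τ)).congr' ?_))
  filter_upwards [eventually_not_inLattice_nhdsNE hτ 0, eventually_shiftedTheta_ne_zero hτ 0]
    with z hz hz0
  rw [mul_right_cancel₀ hz0 (hc z hz)]

end SimpleZero

/-- The function `ζ(z|τ) - η₁(τ)z`, the modification of `ζ` with period `1`. -/
def periodicZeta (zeta : ℂ → ℂ → ℂ) (eta1 : ℂ → ℂ) (τ z : ℂ) : ℂ :=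
  zeta τ z - eta1 τ * z

section PeriodicZeta

variable {zeta : ℂ → ℂ → ℂ} {eta1 : ℂ → ℂ} {τ : ℂ}

lemma periodicZeta_add_one (heta1 : IsEta1 zeta eta1) (hτ : 0 < τ.im) {z : ℂ}
    (hz : ¬ InLattice τ z) : periodicZeta zeta eta1 τ (z + 1) = periodicZeta zeta eta1 τ z := by
  rw [periodicZeta, periodicZeta]
  linear_combination -heta1 τ hτ z hz

namespace IsWeierstrassZeta

lemma periodicZeta_neg (hzeta : IsWeierstrassZeta zeta) (eta1 : ℂ → ℂ) (hτ : 0 < τ.im) (z : ℂ) :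
    periodicZeta zeta eta1 τ (-z) = -periodicZeta zeta eta1 τ z := by
  rw [periodicZeta, periodicZeta, (hzeta τ hτ).1]
  ring

lemma exists_periodicZeta_add (hzeta : IsWeierstrassZeta zeta) (eta1 : ℂ → ℂ) (hτ : 0 < τ.im) :
    ∃ c, ∀ z, ¬ InLattice τ z →
      periodicZeta zeta eta1 τ (z + τ) = periodicZeta zeta eta1 τ z + c := by
  obtain ⟨c, hc⟩ := hzeta.exists_quasiPeriod hτ (.self τ)
  refine ⟨c - eta1 τ * τ, fun z hz => ?_⟩
  rw [periodicZeta, periodicZeta, hc z hz]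
  ring

lemma hasDerivAt_periodicZeta (hzeta : IsWeierstrassZeta zeta) (eta1 : ℂ → ℂ) (hτ : 0 < τ.im)
    {z : ℂ} (hz : ¬ InLattice τ z) :
    HasDerivAt (periodicZeta zeta eta1 τ) (-(wp τ z + eta1 τ)) z :=
  (((hzeta τ hτ).2.1 z hz).sub ((hasDerivAt_id z).const_mul (eta1 τ))).congr_deriv (by ring)

lemma tendsto_periodicZeta_mul_shiftedTheta (hzeta : IsWeierstrassZeta zeta) (eta1 : ℂ → ℂ)
    (hτ : 0 < τ.im) {l : ℂ} (hl : InLattice τ l) :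
    Tendsto (fun z => periodicZeta zeta eta1 τ z * shiftedTheta 0 τ z) (𝓝[≠] l)
      (𝓝 (shiftedTheta 1 τ l)) := by
  have hzero := shiftedTheta_zero_of_inLattice hl
  have hlinear : Tendsto (fun z => eta1 τ * z * shiftedTheta 0 τ z) (𝓝[≠] l) (𝓝 0) := by
    have hc : Continuous fun z => eta1 τ * z * shiftedTheta 0 τ z :=
      (continuous_const.mul continuous_id).mul (differentiable_shiftedTheta 0 hτ).continuous
    simpa [hzero] using (hc.tendsto l).mono_left nhdsWithin_le_nhds
  have hmain := ((hzeta.tendsto_sub_mul hτ hl).mul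
    (hasDerivAt_shiftedTheta 0 hτ l).tendsto_slope).sub hlinear
  rw [one_mul, sub_zero] at hmain
  refine hmain.congr' ?_
  filter_upwards [self_mem_nhdsWithin] with z hz
  rw [slope_def_field, hzero, periodicZeta]
  field_simp [sub_ne_zero.mpr hz]
  ring

lemma exists_periodicZeta_mul_shiftedTheta_add_eq (hzeta : IsWeierstrassZeta zeta)
    (heta1 : IsEta1 zeta eta1) (hτ : 0 < τ.im) : ∃ κ c, ∀ z, ¬ InLattice τ z →
      periodicZeta zeta eta1 τ z * shiftedTheta 0 τ z + κ * shiftedTheta 1 τ z =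
        c * shiftedTheta 0 τ z := by
  obtain ⟨L, hL⟩ := hzeta.exists_periodicZeta_add eta1 hτ
  set κ := L / (2 * π * I)
  have hκ : L = κ * (2 * π * I) := (div_mul_cancel₀ L two_pi_I_ne_zero).symm
  have hcont : Continuous (shiftedTheta 1 τ) := (differentiable_shiftedTheta 1 hτ).continuous
  refine ⟨κ, exists_eq_const_mul_shiftedTheta hτ
    (fun z hz => ((hzeta.hasDerivAt_periodicZeta eta1 hτ hz).differentiableAt.mul
      (differentiable_shiftedTheta 0 hτ z)).add ((differentiable_shiftedTheta 1 hτ z).const_mul κ))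
    (fun l hl => ⟨_, (hzeta.tendsto_periodicZeta_mul_shiftedTheta eta1 hτ hl).add
      (hcont.continuousWithinAt.const_mul κ)⟩) (fun z hz => ?_) (fun z hz => ?_)⟩
  · rw [periodicZeta_add_one heta1 hτ hz, periodic_shiftedTheta_zero, periodic_shiftedTheta_one]
  · rw [hL z hz, shiftedTheta_zero_add, shiftedTheta_one_add, hκ]
    ring

lemma exists_shiftedTheta_one_eq (hzeta : IsWeierstrassZeta zeta) (heta1 : IsEta1 zeta eta1)
    (hτ : 0 < τ.im) : ∃ c, ∀ z, ¬ InLattice τ z →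
      shiftedTheta 1 τ z = (periodicZeta zeta eta1 τ z - c) * shiftedTheta 0 τ z := by
  obtain ⟨κ, c, hc⟩ := hzeta.exists_periodicZeta_mul_shiftedTheta_add_eq heta1 hτ
  have tendsto_zero (k : ℕ) : Tendsto (shiftedTheta k τ) (𝓝[≠] 0) (𝓝 (shiftedTheta k τ 0)) :=
    (differentiable_shiftedTheta k hτ).continuous.continuousWithinAt
  have hzero : shiftedTheta 1 τ 0 + κ * shiftedTheta 1 τ 0 = c * shiftedTheta 0 τ 0 := by
    refine tendsto_nhds_unique
      (((hzeta.tendsto_periodicZeta_mul_shiftedTheta eta1 hτ (.zero τ)).add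
        ((tendsto_zero 1).const_mul κ)).congr' ?_) ((tendsto_zero 0).const_mul c)
    filter_upwards [eventually_not_inLattice_nhdsNE hτ 0] with z hz using hc z hz
  have hκ : κ = -1 := by
    rw [shiftedTheta_zero_of_inLattice (.zero τ)] at hzero
    refine mul_right_cancel₀ (shiftedTheta_one_zero_ne_zero hτ) ?_
    linear_combination hzero
  refine ⟨c, fun z hz => ?_⟩
  have h := hc z hz
  rw [hκ] at h
  linear_combination -h

theorem shiftedTheta_one_eq_mul (hzeta : IsWeierstrassZeta zeta) (heta1 : IsEta1 zeta eta1)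
    (hτ : 0 < τ.im) {z : ℂ} (hz : ¬ InLattice τ z) :
    shiftedTheta 1 τ z = (periodicZeta zeta eta1 τ z - π * I) * shiftedTheta 0 τ z := by
  obtain ⟨c, hc⟩ := hzeta.exists_shiftedTheta_one_eq heta1 hτ
  suffices hc_eq : c = π * I by rw [hc z hz, hc_eq]
  obtain ⟨w, hw, hw0⟩ := ((eventually_not_inLattice_nhdsNE hτ 0).and
    (eventually_shiftedTheta_ne_zero hτ 0)).exists
  have hneg := hc (-w) (mt InLattice.neg_iff.mp hw)
  rw [shiftedTheta_one_neg, shiftedTheta_zero_neg, hzeta.periodicZeta_neg eta1 hτ, hc w hw] at hneg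
  refine mul_right_cancel₀ (mul_ne_zero (exp_ne_zero (2 * π * I * w)) hw0) ?_
  linear_combination -hneg / 2

lemma shiftedTheta_two_eq (hzeta : IsWeierstrassZeta zeta) (heta1 : IsEta1 zeta eta1)
    (hτ : 0 < τ.im) {z : ℂ} (hz : ¬ InLattice τ z) :
    shiftedTheta 2 τ z = -(wp τ z + eta1 τ) * shiftedTheta 0 τ z +
      (periodicZeta zeta eta1 τ z - π * I) * shiftedTheta 1 τ z := by
  refine (hasDerivAt_shiftedTheta 1 hτ z).unique (HasDerivAt.congr_of_eventuallyEq
    (((hzeta.hasDerivAt_periodicZeta eta1 hτ hz).sub_const (π * I)).mul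
      (hasDerivAt_shiftedTheta 0 hτ z)) ?_)
  filter_upwards [eventually_not_inLattice hτ hz] with w hw
    using hzeta.shiftedTheta_one_eq_mul heta1 hτ hw

lemma shiftedTheta_three_eq (hzeta : IsWeierstrassZeta zeta) (heta1 : IsEta1 zeta eta1)
    (hτ : 0 < τ.im) {z : ℂ} (hz : ¬ InLattice τ z) :
    shiftedTheta 3 τ z = -wpd τ z * shiftedTheta 0 τ z -
      2 * (wp τ z + eta1 τ) * shiftedTheta 1 τ z +
      (periodicZeta zeta eta1 τ z - π * I) * shiftedTheta 2 τ z := by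
  have hd := (((hasDerivAt_wp hτ hz).add_const (eta1 τ)).fun_neg.mul
    (hasDerivAt_shiftedTheta 0 hτ z)).add
    (((hzeta.hasDerivAt_periodicZeta eta1 hτ hz).sub_const (π * I)).mul
      (hasDerivAt_shiftedTheta 1 hτ z))
  have h := (hasDerivAt_shiftedTheta 2 hτ z).unique (hd.congr_of_eventuallyEq ?_)
  · linear_combination h
  · filter_upwards [eventually_not_inLattice hτ hz] with w hw
      using hzeta.shiftedTheta_two_eq heta1 hτ hw

-- A zero off the lattice would have the same order for the theta function and its derivative.
theorem shiftedTheta_zero_ne_zero (hzeta : IsWeierstrassZeta zeta) (heta1 : IsEta1 zeta eta1)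
    (hτ : 0 < τ.im) {z : ℂ} (hz : ¬ InLattice τ z) : shiftedTheta 0 τ z ≠ 0 := by
  intro h0
  have han (k : ℕ) : AnalyticAt ℂ (shiftedTheta k τ) z :=
    (differentiable_shiftedTheta k hτ).analyticAt z
  have hφ : AnalyticAt ℂ (fun w => periodicZeta zeta eta1 τ w - π * I) z := by
    refine analyticAt_iff_eventually_differentiableAt.mpr ?_
    filter_upwards [eventually_not_inLattice hτ hz] with w hw
    exact (hzeta.hasDerivAt_periodicZeta eta1 hτ hw).differentiableAt.sub_const _
  have hode : shiftedTheta 1 τ =ᶠ[𝓝 z]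
      (fun w => periodicZeta zeta eta1 τ w - π * I) * shiftedTheta 0 τ := by
    filter_upwards [eventually_not_inLattice hτ hz] with w hw
      using hzeta.shiftedTheta_one_eq_mul heta1 hτ hw
  have hle : analyticOrderAt (shiftedTheta 0 τ) z ≤ analyticOrderAt (shiftedTheta 1 τ) z := by
    rw [analyticOrderAt_congr hode, analyticOrderAt_mul hφ (han 0)]
    exact le_add_self
  have hsucc : analyticOrderAt (shiftedTheta 1 τ) z + 1 = analyticOrderAt (shiftedTheta 0 τ) z := by
    simpa only [deriv_shiftedTheta 0 hτ, h0, sub_zero] using (han 0).analyticOrderAt_deriv_add_one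
  have htop : analyticOrderAt (shiftedTheta 0 τ) z = ⊤ := by
    by_contra hne
    rw [← hsucc] at hle hne
    exact (ENat.lt_add_one_iff (by simpa using hne)).mpr le_rfl |>.not_ge hle
  obtain ⟨w, hw, hw0⟩ := ((analyticOrderAt_eq_top.mp htop).filter_mono nhdsWithin_le_nhds |>.and
    (eventually_shiftedTheta_ne_zero hτ z)).exists
  exact hw0 hw

theorem hasDerivAt_periodicZeta_comp (hzeta : IsWeierstrassZeta zeta) (heta1 : IsEta1 zeta eta1)
    (hτ : 0 < τ.im) {g : ℂ → ℂ} {g' : ℂ} (hg : HasDerivAt g g' τ) (hz : ¬ InLattice τ (g τ)) :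
    HasDerivAt (fun s => periodicZeta zeta eta1 s (g s))
      (-(wpd τ (g τ) + 2 * periodicZeta zeta eta1 τ (g τ) * (wp τ (g τ) + eta1 τ)) / (4 * π * I) -
        (wp τ (g τ) + eta1 τ) * g') τ := by
  have h0 := hzeta.shiftedTheta_zero_ne_zero heta1 hτ hz
  have d0 := hasDerivAt_shiftedTheta_comp 0 hτ hg
  have heq : ∀ᶠ s in 𝓝 τ, periodicZeta zeta eta1 s (g s) =
      shiftedTheta 1 s (g s) / shiftedTheta 0 s (g s) + π * I := by
    filter_upwards [d0.continuousAt.eventually_ne h0,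
      (isOpen_lt continuous_const continuous_im).mem_nhds hτ] with s hs hsτ
    rw [hzeta.shiftedTheta_one_eq_mul heta1 hsτ (mt shiftedTheta_zero_of_inLattice hs),
      mul_div_cancel_right₀ _ hs, sub_add_cancel]
  refine ((((hasDerivAt_shiftedTheta_comp 1 hτ hg).div d0 h0).add_const
    (π * I)).congr_of_eventuallyEq heq).congr_deriv ?_
  simp only [Nat.reduceAdd, zero_add]
  rw [hzeta.shiftedTheta_three_eq heta1 hτ hz, hzeta.shiftedTheta_two_eq heta1 hτ hz,
    hzeta.shiftedTheta_one_eq_mul heta1 hτ hz]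
  field_simp
  ring

end IsWeierstrassZeta

end PeriodicZeta

lemma IsWeierstrassZeta.hasDerivAt_zeta_two_mul_sub {zeta : ℂ → ℂ → ℂ} {eta1 : ℂ → ℂ} {τ : ℂ}
    (hzeta : IsWeierstrassZeta zeta) (heta1 : IsEta1 zeta eta1) (hτ : 0 < τ.im) {p : ℂ → ℂ}
    {p' : ℂ} (hp : HasDerivAt p p' τ) (h2p : ¬ InLattice τ (2 * p τ)) :
    HasDerivAt (fun s => zeta s (2 * p s) - 2 * zeta s (p s))
      (I / (4 * π) * (wpd τ (2 * p τ) - 2 * wpd τ (p τ) +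
          2 * periodicZeta zeta eta1 τ (2 * p τ) * (wp τ (2 * p τ) + eta1 τ) -
          4 * periodicZeta zeta eta1 τ (p τ) * (wp τ (p τ) + eta1 τ)) -
        2 * (wp τ (2 * p τ) - wp τ (p τ)) * p') τ := by
  have hpτ : ¬ InLattice τ (p τ) := mt InLattice.two_mul h2p
  have h := (hzeta.hasDerivAt_periodicZeta_comp heta1 hτ (g := fun s => 2 * p s)
    (hp.const_mul 2) h2p).sub
    ((hzeta.hasDerivAt_periodicZeta_comp heta1 hτ hp hpτ).const_mul 2)
  refine (h.congr_of_eventuallyEq (.of_forall fun s => ?_)).congr_deriv ?_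
  · simp only [periodicZeta, Pi.sub_apply]
    ring
  · have hI : (4 * π * I : ℂ)⁻¹ = -(I / (4 * π)) := by
      rw [mul_inv, inv_I]
      ring
    simp only [div_eq_mul_inv _ (4 * π * I : ℂ), hI]
    ring

theorem F_linear_ODE_general
    (n : Fin 4 → ℂ) (zeta : ℂ → ℂ → ℂ) (eta1 : ℂ → ℂ)
    (hzeta : IsWeierstrassZeta zeta) (heta1 : IsEta1 zeta eta1)
    (V : Set ℂ) (hVH : ∀ τ ∈ V, 0 < τ.im) (p A : ℂ → ℂ)
    (hreg : ∀ τ ∈ V, ¬ InLattice τ (2 * p τ))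
    (hham : HamSystem n zeta eta1 V p A) (F : ℂ → ℂ)
    (hF : ∀ τ, F τ = A τ + (1 / 2) * (zeta τ (2 * p τ) - 2 * zeta τ (p τ))) :
    ∀ τ ∈ V, HasDerivAt F
      ((I / (2 * π)) * (2 * wp τ (2 * p τ) - wp τ (p τ) + eta1 τ) * F τ
        - (I / (4 * π)) * ∑ k : Fin 4, n k * (n k + 1) * wpd τ (p τ + halfp τ k / 2)) τ := by
  intro τ hτV
  have hτ := hVH τ hτV
  have h2p := hreg τ hτV
  obtain ⟨dp, dA⟩ := hham τ hτV
  have dF := dA.add ((hzeta.hasDerivAt_zeta_two_mul_sub heta1 hτ dp h2p).const_mul (1 / 2))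
  refine (dF.congr_of_eventuallyEq (.of_forall hF)).congr_deriv ?_
  rw [hF τ, periodicZeta, periodicZeta]
  linear_combination (I / (4 * π)) * hzeta.duplication hτ h2p

/-- Theorem 1.5, differential form: with
`F(τ) = A(τ) + (1/2)(ζ(2p|τ) - 2ζ(p|τ))`, a solution of the Hamiltonian system satisfies
`dF/dτ = (i/(2π))(2℘(2p) - ℘(p) + η₁)F - (i/(4π)) Σ n_k(n_k+1)℘′(p + ω_k/2)`;
in particular if all `n_k = 0` then `F` solves the homogeneous linear equation. -/
theorem F_linear_ODE
    (n : Fin 4 → ℂ) (zeta : ℂ → ℂ → ℂ) (eta1 : ℂ → ℂ)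
    (hzeta : IsWeierstrassZeta zeta) (heta1 : IsEta1 zeta eta1)
    (V : Set ℂ) (hVopen : IsOpen V) (hVH : ∀ τ ∈ V, 0 < τ.im)
    (p A : ℂ → ℂ)
    (hpdiff : DifferentiableOn ℂ p V) (hAdiff : DifferentiableOn ℂ A V)
    (hreg : ∀ τ ∈ V, ¬ InLattice τ (p τ) ∧ ¬ InLattice τ (2 * p τ) ∧
      ∀ k : Fin 4, ¬ InLattice τ (p τ + halfp τ k / 2))
    (hham : HamSystem n zeta eta1 V p A)
    (F : ℂ → ℂ)
    (hF : ∀ τ, F τ = A τ + (1 / 2) * (zeta τ (2 * p τ) - 2 * zeta τ (p τ))) :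
    (∀ τ ∈ V, HasDerivAt F
      ((Complex.I / (2 * (Real.pi : ℂ))) *
          (2 * wp τ (2 * p τ) - wp τ (p τ) + eta1 τ) * F τ
        - (Complex.I / (4 * (Real.pi : ℂ))) *
          ∑ k : Fin 4, n k * (n k + 1) * wpd τ (p τ + halfp τ k / 2)) τ) ∧
    ((∀ k : Fin 4, n k = 0) → ∀ τ ∈ V, HasDerivAt F
      ((Complex.I / (2 * (Real.pi : ℂ))) *
        (2 * wp τ (2 * p τ) - wp τ (p τ) + eta1 τ) * F τ) τ) := by
  have main := F_linear_ODE_general n zeta eta1 hzeta heta1 V hVH p A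
    (fun τ hτ => (hreg τ hτ).2.1) hham F hF
  exact ⟨main, fun hn τ hτ => by simpa [hn] using main τ hτ⟩
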